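/- Let n ≥ 1 and let c_1, …, c_n be positive integers such that M(c_1, …, c_n) = Id or M(c_1, …, c_n) = −Id. Then c_1 + c_2 + ⋯ + c_n ≤ 3n − 6. -/

import Mathlib

/-- `M(c₁, …, c_n) = [[c₁,−1],[1,0]] ⋯ [[c_n,−1],[1,0]]`. -/
def Mneg (cs : List ℤ) : Matrix (Fin 2) (Fin 2) ℤ :=
  (cs.map fun c => !![c, -1; 1, 0]).prod

/-!
The defect `3n - (c₁ + ⋯ + c_n)` is unchanged by the move `(a, 1, b) ↦ (a - 1, b - 1)`, which
preserves `M`, and drops by `6` under the move `(a, 0, b) ↦ (a + b)`, which negates `M`. Since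
`M = ±Id` is invariant under cyclic rotation, a move applies to any solution of length at least `3`
that has an entry below `2`; and if all entries are at least `2`, then the first column `(p, q)` of
`M` satisfies `0 < q < p`, which rules out `M = ±Id`. Allowing zero entries makes the class of
solutions closed under both moves, and they all end at `(0, 0)`, whose defect is `6`.
-/

theorem mul_eq_smul_one_symm {G M : Type*} [Group G] [Monoid M] [IsDedekindFiniteMonoid M]
    [MulAction G M] [IsScalarTower G M M] [SMulCommClass G M M] {g : G} {a b : M}
    (h : a * b = g • 1) : b * a = g • 1 := by
  have hinv : (g⁻¹ • a) * b = 1 := by rw [smul_mul_assoc, h, inv_smul_smul]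
  rw [← mul_eq_one_comm.mp hinv, mul_smul_comm, smul_inv_smul]

theorem exists_isRotated_cons_cons_cons {α : Type*} {l : List α} {x : α} (hx : x ∈ l)
    (hl : 3 ≤ l.length) : ∃ a b m, l ~r a :: x :: b :: m := by
  obtain ⟨s, t, rfl⟩ := List.append_of_mem hx
  have hfront : s ++ x :: t ~r x :: (t ++ s) := List.isRotated_append
  obtain ⟨b, m, a, hts⟩ : ∃ b m a, t ++ s = b :: (m ++ [a]) := by
    have hlen : 2 ≤ (t ++ s).length := by
      simp only [List.length_append, List.length_cons] at hl ⊢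
      lia
    generalize t ++ s = u at hlen
    rcases u with _ | ⟨b, u⟩
    · simp at hlen
    · rcases List.eq_nil_or_concat' u with rfl | ⟨m, a, rfl⟩
      · simp at hlen
      · exact ⟨b, m, a, rfl⟩
  rw [hts] at hfront
  exact ⟨a, b, m, hfront.trans (List.isRotated_append (l := x :: b :: m) (l' := [a]))⟩

theorem Mneg_cons (a : ℤ) (l : List ℤ) : Mneg (a :: l) = !![a, -1; 1, 0] * Mneg l := by
  simp [Mneg]

theorem Mneg_append (l l' : List ℤ) : Mneg (l ++ l') = Mneg l * Mneg l' := by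
  simp [Mneg]

theorem Mneg_cons_zero_cons (a b : ℤ) (l : List ℤ) :
    Mneg (a :: 0 :: b :: l) = -Mneg ((a + b) :: l) := by
  have hblock : !![a, -1; 1, 0] * !![0, -1; 1, 0] * !![b, -1; 1, 0] =
      -!![a + b, -1; 1, 0] := by
    simp
  simp only [Mneg_cons, ← mul_assoc, ← neg_mul, hblock]

theorem Mneg_cons_one_cons (a b : ℤ) (l : List ℤ) :
    Mneg (a :: 1 :: b :: l) = Mneg ((a - 1) :: (b - 1) :: l) := by
  have hblock : !![a, -1; 1, 0] * !![1, -1; 1, 0] * !![b, -1; 1, 0] =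
      !![a - 1, -1; 1, 0] * !![b - 1, -1; 1, 0] := by
    ext i j
    fin_cases i <;> fin_cases j <;> simp <;> ring
  simp only [Mneg_cons, ← mul_assoc, hblock]

theorem Mneg_eq_smul_one_of_isRotated {ε : ℤˣ} {c c' : List ℤ} (hrot : c ~r c')
    (hM : Mneg c = ε • 1) : Mneg c' = ε • 1 := by
  obtain ⟨k, rfl⟩ := hrot
  rw [← List.take_append_drop (k % c.length) c, Mneg_append] at hM
  rw [List.rotate_eq_drop_append_take_mod, Mneg_append]
  exact mul_eq_smul_one_symm hM

theorem Mneg_one_zero_nonneg_and_lt_of_two_le {c : List ℤ} (hc : ∀ x ∈ c, 2 ≤ x) :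
    0 ≤ Mneg c 1 0 ∧ Mneg c 1 0 < Mneg c 0 0 := by
  induction c with
  | nil => simp [Mneg]
  | cons a l ih =>
    obtain ⟨ha, hl⟩ := List.forall_mem_cons.mp hc
    obtain ⟨hnonneg, hlt⟩ := ih hl
    have htop : Mneg (a :: l) 0 0 = a * Mneg l 0 0 - Mneg l 1 0 := by
      simp [Mneg_cons, Matrix.mul_apply, sub_eq_add_neg]
    have hbot : Mneg (a :: l) 1 0 = Mneg l 0 0 := by
      simp [Mneg_cons, Matrix.mul_apply]
    rw [htop, hbot]
    constructor <;> nlinarith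

theorem exists_mem_lt_two_of_Mneg_eq_smul_one {ε : ℤˣ} {c : List ℤ} (hc : c ≠ [])
    (hM : Mneg c = ε • 1) : ∃ x ∈ c, x < 2 := by
  by_contra! htwo
  obtain ⟨a, l, rfl⟩ := List.exists_cons_of_ne_nil hc
  have hcol := Mneg_one_zero_nonneg_and_lt_of_two_le (List.forall_mem_cons.mp htwo).2
  have hzero : Mneg l 0 0 = 0 := by
    simpa [Mneg_cons, Matrix.mul_apply] using congrFun₂ hM 1 0
  lia

theorem Mneg_singleton_ne_smul_one (ε : ℤˣ) (a : ℤ) : Mneg [a] ≠ ε • 1 := by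
  intro hM
  simpa [Mneg] using congrFun₂ hM 1 0

theorem Mneg_pair_eq_smul_one_iff {ε : ℤˣ} {a b : ℤ} :
    Mneg [a, b] = ε • 1 ↔ a = 0 ∧ b = 0 ∧ ε = -1 := by
  constructor
  · intro hM
    obtain rfl : a = 0 := by simpa [Mneg] using congrFun₂ hM 0 1
    obtain rfl : b = 0 := by simpa [Mneg] using congrFun₂ hM 1 0
    have hε : (-1 : ℤ) = ε := by simpa [Mneg, Units.smul_def] using congrFun₂ hM 0 0
    exact ⟨rfl, rfl, Units.ext hε.symm⟩
  · rintro ⟨rfl, rfl, rfl⟩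
    simp [Mneg, Matrix.one_fin_two]

theorem exists_isRotated_zero_or_one_of_Mneg_eq_smul_one {ε : ℤˣ} {c : List ℤ} (hlen : 3 ≤ c.length)
    (hc : ∀ x ∈ c, 0 ≤ x) (hM : Mneg c = ε • 1) :
    (∃ a b m, c ~r a :: 0 :: b :: m) ∨
      ∃ a b m, c ~r a :: 1 :: b :: m ∧ 1 ≤ a ∧ 1 ≤ b := by
  by_cases hzero : 0 ∈ c
  · exact .inl (exists_isRotated_cons_cons_cons hzero hlen)
  have hone_le : ∀ x ∈ c, 1 ≤ x := fun x hx ↦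
    (hc x hx).lt_of_ne fun h ↦ hzero (h ▸ hx)
  obtain ⟨x, hx, hlt⟩ :=
    exists_mem_lt_two_of_Mneg_eq_smul_one (List.ne_nil_of_length_pos (by lia)) hM
  obtain rfl : x = 1 := le_antisymm (by lia) (hone_le x hx)
  obtain ⟨a, b, m, hrot⟩ := exists_isRotated_cons_cons_cons hx hlen
  exact .inr ⟨a, b, m, hrot, hone_le a (hrot.mem_iff.mpr (by simp)),
    hone_le b (hrot.mem_iff.mpr (by simp))⟩

theorem exists_shorter_of_Mneg_eq_smul_one {ε : ℤˣ} {c : List ℤ} (hlen : 3 ≤ c.length)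
    (hc : ∀ x ∈ c, 0 ≤ x) (hM : Mneg c = ε • 1) :
    ∃ (c' : List ℤ) (ε' : ℤˣ) (j : ℕ), c' ≠ [] ∧ c'.length < c.length ∧ (∀ x ∈ c', 0 ≤ x) ∧
      Mneg c' = ε' • 1 ∧ ε = ε' * (-1) ^ j ∧
      3 * (c.length : ℤ) - c.sum = 3 * (c'.length : ℤ) - c'.sum + 6 * j := by
  obtain ⟨a, b, m, hrot⟩ | ⟨a, b, m, hrot, ha, hb⟩ :=
    exists_isRotated_zero_or_one_of_Mneg_eq_smul_one hlen hc hM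
  all_goals
    have hM' := Mneg_eq_smul_one_of_isRotated hrot hM
    have hc' := fun x hx ↦ hc x (hrot.mem_iff.mpr hx)
    simp only [List.forall_mem_cons] at hc'
    rw [hrot.perm.sum_eq, hrot.perm.length_eq]
  · obtain ⟨ha, -, hb, hm⟩ := hc'
    rw [Mneg_cons_zero_cons, neg_eq_iff_eq_neg, ← Units.neg_smul] at hM'
    refine ⟨(a + b) :: m, -ε, 1, List.cons_ne_nil _ _, by simp,
      List.forall_mem_cons.mpr ⟨add_nonneg ha hb, hm⟩, hM', by simp, ?_⟩
    simp only [List.sum_cons, List.length_cons]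
    lia
  · obtain ⟨-, -, -, hm⟩ := hc'
    rw [Mneg_cons_one_cons] at hM'
    refine ⟨(a - 1) :: (b - 1) :: m, ε, 0, List.cons_ne_nil _ _, by simp,
      by simpa only [List.forall_mem_cons, sub_nonneg] using ⟨ha, hb, hm⟩, hM', by simp, ?_⟩
    simp only [List.sum_cons, List.length_cons]
    lia

theorem stmt10_general {ε : ℤˣ} {c : List ℤ} (hne : c ≠ []) (hc : ∀ x ∈ c, 0 ≤ x)
    (hM : Mneg c = ε • 1) :
    ∃ k : ℕ, 0 < k ∧ ε = (-1) ^ k ∧ c.sum = 3 * (c.length : ℤ) - 6 * k := by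
  induction hn : c.length using Nat.strong_induction_on generalizing c ε with | _ n ih
  subst hn
  obtain hlen | hlen := lt_or_ge c.length 3
  · match c, hlen with
    | [a], _ => exact absurd hM (Mneg_singleton_ne_smul_one ε a)
    | [a, b], _ =>
      obtain ⟨rfl, rfl, rfl⟩ := Mneg_pair_eq_smul_one_iff.mp hM
      exact ⟨1, by simp⟩
  · obtain ⟨c', ε', j, hne', hlt, hc', hM', rfl, hdefect⟩ :=
      exists_shorter_of_Mneg_eq_smul_one hlen hc hM
    obtain ⟨k, hk, rfl, hsum⟩ := ih c'.length hlt hne' hc' hM' rfl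
    exact ⟨k + j, by lia, (pow_add _ k j).symm, by lia⟩

/-- if `n ≥ 1` and `c₁, …, c_n` are positive integers with
`M(c₁, …, c_n) = Id` or `M(c₁, …, c_n) = −Id`, then
`c₁ + c₂ + ⋯ + c_n ≤ 3n − 6`. -/
theorem stmt10 (n : ℕ) (hn : 1 ≤ n) (c : List ℤ) (hlen : c.length = n)
    (hpos : ∀ x ∈ c, 1 ≤ x)
    (hM : Mneg c = 1 ∨ Mneg c = -1) :
    c.sum ≤ 3 * (n : ℤ) - 6 := by
  obtain ⟨ε, hε⟩ : ∃ ε : ℤˣ, Mneg c = ε • 1 :=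
    hM.elim (fun h ↦ ⟨1, by simpa using h⟩) fun h ↦ ⟨-1, by simpa using h⟩
  obtain ⟨k, hk, -, hsum⟩ := stmt10_general (List.ne_nil_of_length_pos (by lia))
    (fun x hx ↦ zero_le_one.trans (hpos x hx)) hε
  lia
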